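/- Let Φ be a Young function such that Φ and its conjugate Φ̃ are of class Δ₂ ∩ Δ', let {T(x)}_{x∈ℝ^N} be an N-dimensional dynamical system on Ω, and let f satisfy (H₁)–(H₄). Let ψ₀(x,ω) = Σ_i φ_i^0(x)χ_i(ω) with φ_i^0 ∈ C_c^∞(Q) and χ_i : Ω → ℝ measurable, T-invariant (for every y ∈ ℝ^N, χ_i(T(y)ω) = χ_i(ω) for μ-a.e. ω) and ∫_Ω Φ(|χ_i|) dμ < ∞; let ψ₁(x,ω) = Σ_i φ_i^1(x)w_i(ω) with φ_i^1 ∈ C_c^∞(Q) and w_i bounded measurable admitting a bounded stochastic gradient G_i; and let ψ₂(x,ω,y) = Σ_i φ_i^2(x)w_i'(ω)g_i(y) with φ_i^2 ∈ C_c^∞(Q), w_i' bounded measurable admitting a bounded stochastic gradient G_i', and g_i ∈ C^∞(ℝ^N) ℤ^N-periodic. For ε > 0 define φ_ε(x,ω) = ψ₀(x,ω) + ε ψ₁(x, T(x/ε)ω) + ε² ψ₂(x, T(x/ε)ω, x/ε²). Then for μ-a.e. ω the map x ↦ φ_ε(x,ω) is C¹ on Q, and lim_{ε→0⁺} ∫_{Q×Ω}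 f(x, T(x/ε)ω, x/ε², ∇_x φ_ε(x,ω)) dx dμ(ω) = ∫_{Q×Ω×Y} f(x, ω, y, ∇_x ψ₀(x,ω) + D_ω ψ₁(x,ω) + ∇_y ψ₂(x,ω,y)) dx dμ(ω) dy, where D_ω ψ₁(x,ω) = Σ_i φ_i^1(x) G_i(ω). -/

import Mathlib

open MeasureTheory Filter Topology ENNReal

noncomputable section

/-- Euclidean norm on `Fin N → ℝ`. -/
def enorm2 {N : ℕ} (v : Fin N → ℝ) : ℝ := Real.sqrt (∑ i, v i ^ 2)

/-- `Φ : [0,∞) → [0,∞)` is a Young function: continuous, convex, positive on `(0,∞)`,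
with `Φ(t)/t → 0` as `t → 0⁺` and `Φ(t)/t → ∞` as `t → ∞` (so `Φ(0) = 0`). -/
def IsYoung (Φ : ℝ → ℝ) : Prop :=
  ContinuousOn Φ (Set.Ici 0) ∧ ConvexOn ℝ (Set.Ici 0) Φ ∧ Φ 0 = 0 ∧
    (∀ t : ℝ, 0 < t → 0 < Φ t) ∧ (∀ t : ℝ, 0 ≤ t → 0 ≤ Φ t) ∧
    Tendsto (fun t => Φ t / t) (nhdsWithin 0 (Set.Ioi 0)) (nhds 0) ∧
    Tendsto (fun t => Φ t / t) atTop atTop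

/-- The `Δ₂`-condition (at infinity). -/
def Delta2 (Φ : ℝ → ℝ) : Prop :=
  ∃ α : ℝ, 0 < α ∧ ∃ t₀ : ℝ, 0 ≤ t₀ ∧ ∀ t : ℝ, t₀ ≤ t → Φ (2 * t) ≤ α * Φ t

/-- The `Δ'`-condition (at infinity). -/
def DeltaPrime (Φ : ℝ → ℝ) : Prop :=
  ∃ k : ℝ, 0 < k ∧ ∃ t₀ s₀ : ℝ, 0 ≤ t₀ ∧ 0 ≤ s₀ ∧
    ∀ t s : ℝ, t₀ ≤ t → s₀ ≤ s → Φ (t * s) ≤ k * Φ t * Φ s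

/-- The conjugate Young function `Φ̃(t) = sup_{s ≥ 0} (st − Φ(s))`. -/
def conjY (Φ : ℝ → ℝ) (t : ℝ) : ℝ := sSup ((fun s => s * t - Φ s) '' Set.Ici 0)

/-- The Luxemburg norm `‖u‖_{Φ,X} = inf {δ > 0 : ∫_X Φ(|u|/δ) dν ≤ 1}` (`+∞` if no such `δ`). -/
def luxNorm {X : Type*} [MeasurableSpace X] (Φ : ℝ → ℝ) (ν : Measure X) (u : X → ℝ) : ℝ≥0∞ :=
  sInf {d : ℝ≥0∞ | ∃ δ : ℝ, 0 < δ ∧ d = ENNReal.ofReal δ ∧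
    (∫⁻ x, ENNReal.ofReal (Φ (|u x| / δ)) ∂ν) ≤ 1}

/-- An `N`-dimensional dynamical system on `Ω` preserving `μ`. -/
def IsDynSys {N : ℕ} {Ω : Type*} [MeasurableSpace Ω] (μ : Measure Ω)
    (T : (Fin N → ℝ) → Ω → Ω) : Prop :=
  T 0 = id ∧ (∀ x y : Fin N → ℝ, T (x + y) = T x ∘ T y) ∧
    (∀ x : Fin N → ℝ, MeasurePreserving (T x) μ μ) ∧
    Measurable fun p : (Fin N → ℝ) × Ω => T p.1 p.2

/-- `ℤ^N`-periodicity. -/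
def ZPeriodic {N : ℕ} (g : (Fin N → ℝ) → ℝ) : Prop :=
  ∀ (y : Fin N → ℝ) (k : Fin N → ℤ), g (y + fun i => (k i : ℝ)) = g y

/-- The unit cube `Y = [0,1]^N`. -/
def Ycube (N : ℕ) : Set (Fin N → ℝ) := Set.Icc 0 1

/-- `ℳ` is countably generated modulo `μ`-null sets. -/
def CountGenModNull {Ω : Type*} [MeasurableSpace Ω] (μ : Measure Ω) : Prop :=
  ∃ S : ℕ → Set Ω, (∀ n, MeasurableSet (S n)) ∧
    ∀ A : Set Ω, MeasurableSet A →
      ∃ B : Set Ω, MeasurableSet[MeasurableSpace.generateFrom (Set.range S)] B ∧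
        μ (symmDiff A B) = 0

/-- Weak stochastic two-scale convergence of `(u k)` to `u₀` along the sequence `(ε k)`. -/
def WeakStoch2Scale {N : ℕ} {Ω : Type*} [MeasurableSpace Ω] (μ : Measure Ω)
    (T : (Fin N → ℝ) → Ω → Ω) (Q : Set (Fin N → ℝ)) (ε : ℕ → ℝ)
    (u : ℕ → (Fin N → ℝ) → Ω → ℝ) (u₀ : (Fin N → ℝ) → Ω → (Fin N → ℝ) → ℝ) : Prop :=
  ∀ φ : (Fin N → ℝ) → ℝ, ContDiff ℝ (⊤ : ℕ∞) φ → HasCompactSupport φ → tsupport φ ⊆ Q →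
    ∀ ψ : Ω → ℝ, Measurable ψ → (∃ C : ℝ, ∀ ω, |ψ ω| ≤ C) →
      ∀ g : (Fin N → ℝ) → ℝ, Continuous g → ZPeriodic g →
        Tendsto
          (fun k => ∫ x in Q, (∫ ω, u k x ω * φ x * ψ (T ((ε k)⁻¹ • x) ω) *
              g (((ε k) ^ 2)⁻¹ • x) ∂μ))
          atTop
          (nhds (∫ x in Q, (∫ ω, (∫ y in Ycube N, u₀ x ω y * φ x * ψ ω * g y) ∂μ)))

/-- A bounded measurable `w : Ω → ℝ` admits the bounded stochastic gradient `G`. -/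
def HasBddStochGrad {N : ℕ} {Ω : Type*} [MeasurableSpace Ω] (μ : Measure Ω)
    (T : (Fin N → ℝ) → Ω → Ω) (w : Ω → ℝ) (G : Ω → Fin N → ℝ) : Prop :=
  Measurable w ∧ (∃ C : ℝ, ∀ ω, |w ω| ≤ C) ∧ Measurable G ∧
    (∃ C : ℝ, ∀ ω, enorm2 (G ω) ≤ C) ∧
    ∀ᵐ ω ∂μ, ContDiff ℝ 1 (fun y => w (T y ω)) ∧
      ∀ (y : Fin N → ℝ) (i : Fin N),
        fderiv ℝ (fun z => w (T z ω)) y (Pi.single i 1) = G (T y ω) i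

/-!
For fixed `x`, the invariance of `μ` under `T(x/ε)` and the `T`-invariance of the `χ_i` turn the
integral over `Ω` into `F(ε, x, x/ε²)`, where `F(e, x, y)` is the mean over `ω` of `f(x, ω, y, ·)`
at the gradient of the test function with the fast variables frozen at `(ω, y)`. This gradient is a
polynomial in `e` which at `e = 0` is `∇_x ψ₀ + D_ω ψ₁ + ∇_y ψ₂`, and it is bounded by a multiple of
`1 + ∑ |χ_i|`. By the growth of `f` and the `Δ₂`-condition, `F` is therefore continuous, bounded and
periodic in `y`.

It remains to show that `∫_Q F(ε, x, x/ε²) dx → ∫_Q ∫_Y F(0, x, y) dy dx`. When `F` is compactly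
supported in `x`, translating by `ε² s` and averaging over `s ∈ Y` replaces the integrand by
`∫_Y F(ε, x + ε² s, x/ε² + s) ds`, whose limit is the mean of `F(0, x, ·)` over a period. The
indicator function of `Q` is then reached by density of `C_c` in `L¹`.
-/

section UnitCube

variable {N : ℕ}

lemma isCompact_Ycube : IsCompact (Ycube N) := isCompact_Icc

lemma volume_real_Ycube : volume.real (Ycube N) = 1 := by
  simp [Measure.real, Ycube]

lemma norm_le_one_of_mem_Ycube {s : Fin N → ℝ} (hs : s ∈ Ycube N) : ‖s‖ ≤ 1 := by
  refine (pi_norm_le_iff_of_nonneg zero_le_one).2 fun i => ?_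
  rw [Real.norm_of_nonneg (hs.1 i)]
  exact hs.2 i

lemma abs_setIntegral_Ycube_le {u : (Fin N → ℝ) → ℝ} {M : ℝ} (hu : ∀ s ∈ Ycube N, |u s| ≤ M) :
    |∫ s in Ycube N, u s| ≤ M := by
  simpa [volume_real_Ycube] using
    norm_setIntegral_le_of_norm_le_const (μ := volume) (f := u)
      isCompact_Ycube.measure_lt_top hu

lemma fundamentalDomain_ae_eq_Ycube :
    ZSpan.fundamentalDomain (Pi.basisFun ℝ (Fin N)) =ᵐ[volume] Ycube N := by
  rw [ZSpan.fundamentalDomain_pi_basisFun]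
  exact Measure.univ_pi_Ico_ae_eq_Icc (f := fun _ => (0 : ℝ)) (g := fun _ => (1 : ℝ))

lemma exists_eq_mem_Ycube_add_int (y : Fin N → ℝ) :
    ∃ z ∈ Ycube N, ∃ k : Fin N → ℤ, y = z + fun i => (k i : ℝ) :=
  ⟨fun i => Int.fract (y i), ⟨fun _ => Int.fract_nonneg _, fun _ => (Int.fract_lt_one _).le⟩,
    fun i => ⌊y i⌋, funext fun i => (Int.fract_add_floor (y i)).symm⟩

end UnitCube

namespace ZPeriodic

variable {N : ℕ} {u : (Fin N → ℝ) → ℝ}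

lemma vadd_span (hu : ZPeriodic u)
    (v : Submodule.span ℤ (Set.range (Pi.basisFun ℝ (Fin N)))) (x : Fin N → ℝ) :
    u (v +ᵥ x) = u x := by
  choose k hk using ((Pi.basisFun ℝ (Fin N)).mem_span_iff_repr_mem ℤ (v : Fin N → ℝ)).1 v.2
  have hv : (v : Fin N → ℝ) = fun i => (k i : ℝ) :=
    funext fun i => by simpa using (hk i).symm
  rw [Submodule.vadd_def, hv, vadd_eq_add, add_comm]
  exact hu x k

open scoped Pointwise in
lemma setIntegral_Ycube_add_left (hu : ZPeriodic u) (c : Fin N → ℝ) :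
    ∫ s in Ycube N, u (c + s) = ∫ s in Ycube N, u s := by
  set D := ZSpan.fundamentalDomain (Pi.basisFun ℝ (Fin N))
  have hD := ZSpan.isAddFundamentalDomain (Pi.basisFun ℝ (Fin N)) volume
  have hinv : VAddInvariantMeasure (Submodule.span ℤ (Set.range (Pi.basisFun ℝ (Fin N))))
      (Fin N → ℝ) volume :=
    ⟨fun v s _ => measure_preimage_add volume (v : Fin N → ℝ) s⟩
  calc ∫ s in Ycube N, u (c + s)
      = ∫ s in D, u (c + s) := (setIntegral_congr_set fundamentalDomain_ae_eq_Ycube).symm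
    _ = ∫ s in c +ᵥ D, u s := ((measurePreserving_add_left volume c).setIntegral_image_emb
        (measurableEmbedding_addLeft c) u D).symm
    _ = ∫ s in D, u s := (hD.setIntegral_eq (hD.vadd_of_comm c) hu.vadd_span).symm
    _ = ∫ s in Ycube N, u s := setIntegral_congr_set fundamentalDomain_ae_eq_Ycube

lemma exists_abs_le (hu : ZPeriodic u) (hc : Continuous u) : ∃ C, ∀ y, |u y| ≤ C := by
  obtain ⟨C, hC⟩ := isCompact_Ycube.exists_bound_of_continuousOn hc.continuousOn
  refine ⟨C, fun y => ?_⟩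
  obtain ⟨z, hz, k, rfl⟩ := exists_eq_mem_Ycube_add_int y
  rw [hu]
  exact hC z hz

lemma fderiv_apply (hu : ZPeriodic u) (v : Fin N → ℝ) :
    ZPeriodic fun y => fderiv ℝ u y v := by
  intro y k
  have hshift : (fun z => u (z + fun i => (k i : ℝ))) = u := funext fun z => hu z k
  change fderiv ℝ u (y + fun i => (k i : ℝ)) v = fderiv ℝ u y v
  rw [← fderiv_comp_add_right, hshift]

end ZPeriodic

section Averaging

variable {N : ℕ} {ι P : Type*} [TopologicalSpace P] {l : Filter ι}
  {F : P → (Fin N → ℝ) → (Fin N → ℝ) → ℝ} {p : ι → P} {p₀ : P} {δ : ι → ℝ}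

lemma eventually_forall_abs_sub_lt_of_periodic {X : Type*} [TopologicalSpace X]
    {u : X → (Fin N → ℝ) → ℝ} (hu : Continuous fun q : X × (Fin N → ℝ) => u q.1 q.2)
    (hper : ∀ x, ZPeriodic (u x)) (x₀ : X) {η : ℝ} (hη : 0 < η) :
    ∀ᶠ x in 𝓝 x₀, ∀ y, |u x y - u x₀ y| < η := by
  have hcube : ∀ᶠ x in 𝓝 x₀, ∀ y ∈ Ycube N, |u x y - u x₀ y| < η := by
    refine isCompact_Ycube.eventually_forall_of_forall_eventually fun y _ => ?_
    have hc : Continuous fun q : X × (Fin N → ℝ) => |u q.1 q.2 - u x₀ q.2| := by fun_prop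
    exact hc.continuousAt.eventually_lt continuousAt_const (by simpa using hη)
  filter_upwards [hcube] with x hx y
  obtain ⟨z, hz, k, rfl⟩ := exists_eq_mem_Ycube_add_int y
  rw [hper, hper]
  exact hx z hz

lemma tendsto_setIntegral_Ycube_of_periodic
    (hF : Continuous fun q : P × (Fin N → ℝ) × (Fin N → ℝ) => F q.1 q.2.1 q.2.2)
    (hper : ∀ e x, ZPeriodic (F e x)) (hp : Tendsto p l (𝓝 p₀)) (hδ : Tendsto δ l (𝓝 0))
    (x : Fin N → ℝ) (c : ι → Fin N → ℝ) :
    Tendsto (fun n => ∫ s in Ycube N, F (p n) (x + δ n • s) (c n + s)) l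
      (𝓝 (∫ s in Ycube N, F p₀ x s)) := by
  rw [Metric.tendsto_nhds]
  intro η hη
  have hunif : ∀ᶠ q : P × (Fin N → ℝ) in 𝓝 p₀ ×ˢ 𝓝 x, ∀ y,
      |F q.1 q.2 y - F p₀ x y| < η / 2 := by
    rw [← nhds_prod_eq]
    exact eventually_forall_abs_sub_lt_of_periodic (u := fun q : P × (Fin N → ℝ) => F q.1 q.2)
      (by fun_prop) (fun q => hper q.1 q.2) (p₀, x) (half_pos hη)
  obtain ⟨U, hU, V, hV, hUV⟩ := eventually_prod_iff.1 hunif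
  obtain ⟨r, hr, hball⟩ := Metric.eventually_nhds_iff.1 hV
  filter_upwards [hp.eventually hU, Metric.tendsto_nhds.1 hδ r hr] with n hpn hδn
  have hclose : ∀ s ∈ Ycube N,
      |F (p n) (x + δ n • s) (c n + s) - F p₀ x (c n + s)| ≤ η / 2 := by
    refine fun s hs => (hUV hpn (hball ?_) _).le
    rw [dist_self_add_left, norm_smul]
    rw [dist_zero_right] at hδn
    exact (mul_le_of_le_one_right (norm_nonneg _) (norm_le_one_of_mem_Ycube hs)).trans_lt hδn
  rw [← (hper p₀ x).setIntegral_Ycube_add_left (c n), Real.dist_eq, ← integral_sub]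
  · exact (abs_setIntegral_Ycube_le hclose).trans_lt (half_lt_self hη)
  all_goals exact (Continuous.continuousOn (by fun_prop)).integrableOn_compact isCompact_Ycube

lemma notMem_of_notMem_cthickening {K : Set (Fin N → ℝ)} {r d : ℝ} (hd : |d| ≤ r)
    {x s : Fin N → ℝ} (hx : x ∉ Metric.cthickening r K) (hs : s ∈ Ycube N) :
    x + d • s ∉ K := by
  refine fun hK => hx (Metric.mem_cthickening_of_dist_le x (x + d • s) r K hK ?_)
  rw [dist_self_add_right, norm_smul, Real.norm_eq_abs]
  exact (mul_le_of_le_one_right (abs_nonneg _) (norm_le_one_of_mem_Ycube hs)).trans hd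

-- Translating `x` by `d • s` leaves the left-hand side unchanged, so it may be averaged over `s`.
lemma integral_comp_inv_smul_eq_integral_setIntegral_Ycube {v : (Fin N → ℝ) → (Fin N → ℝ) → ℝ}
    (hv : Continuous fun q : (Fin N → ℝ) × (Fin N → ℝ) => v q.1 q.2)
    {K : Set (Fin N → ℝ)} (hK : IsCompact K) (hvK : ∀ x ∉ K, ∀ y, v x y = 0)
    {d : ℝ} (hd : d ≠ 0) :
    ∫ x, v x (d⁻¹ • x) = ∫ x, ∫ s in Ycube N, v (x + d • s) (d⁻¹ • x + s) := by
  have hcont : Continuous fun q : (Fin N → ℝ) × (Fin N → ℝ) =>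
      v (q.1 + d • q.2) (d⁻¹ • q.1 + q.2) := by fun_prop
  have hint : IntegrableOn (fun q : (Fin N → ℝ) × (Fin N → ℝ) =>
      v (q.1 + d • q.2) (d⁻¹ • q.1 + q.2)) (Set.univ ×ˢ Ycube N) (volume.prod volume) := by
    refine (hcont.continuousOn.integrableOn_compact
      (hK.cthickening (r := |d|) |>.prod isCompact_Ycube)).of_forall_sdiff_eq_zero
      (MeasurableSet.univ.prod isCompact_Ycube.measurableSet) ?_
    rintro ⟨x, s⟩ ⟨⟨_, hs⟩, hxs⟩
    exact hvK _ (notMem_of_notMem_cthickening le_rfl (fun hx => hxs ⟨hx, hs⟩) hs) _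
  rw [IntegrableOn, ← Measure.prod_restrict, Measure.restrict_univ] at hint
  have htranslate : ∀ s : Fin N → ℝ,
      ∫ x, v (x + d • s) (d⁻¹ • x + s) = ∫ x, v x (d⁻¹ • x) := by
    intro s
    rw [← integral_add_right_eq_self (fun x => v x (d⁻¹ • x)) (d • s)]
    simp only [smul_add, inv_smul_smul₀ hd]
  rw [integral_integral_swap hint]
  simp only [htranslate, setIntegral_const, volume_real_Ycube, one_smul]

lemma tendsto_integral_of_periodic_of_eq_zero_off_compact [l.IsCountablyGenerated]
    (hF : Continuous fun q : P × (Fin N → ℝ) × (Fin N → ℝ) => F q.1 q.2.1 q.2.2)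
    (hper : ∀ e x, ZPeriodic (F e x)) {M : ℝ} (hM : ∀ e x y, |F e x y| ≤ M)
    {K : Set (Fin N → ℝ)} (hK : IsCompact K) (hFK : ∀ e, ∀ x ∉ K, ∀ y, F e x y = 0)
    (hp : Tendsto p l (𝓝 p₀)) (hδ : Tendsto δ l (𝓝[≠] 0)) :
    Tendsto (fun n => ∫ x, F (p n) x ((δ n)⁻¹ • x)) l (𝓝 (∫ x, ∫ y in Ycube N, F p₀ x y)) := by
  obtain ⟨hδ₀, hδne⟩ := tendsto_nhdsWithin_iff.1 hδ
  have hcont : ∀ (e : P) (d : ℝ), Continuous (Function.uncurry fun x s : Fin N → ℝ =>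
      F e (x + d • s) (d⁻¹ • x + s)) := fun e d => by unfold Function.uncurry; fun_prop
  have hunfold : ∀ᶠ n in l, ∫ x, ∫ s in Ycube N,
      F (p n) (x + δ n • s) ((δ n)⁻¹ • x + s) = ∫ x, F (p n) x ((δ n)⁻¹ • x) := by
    filter_upwards [hδne] with n hn
    exact (integral_comp_inv_smul_eq_integral_setIntegral_Ycube (by fun_prop) hK
      (hFK (p n)) hn).symm
  have hδ1 : ∀ᶠ n in l, |δ n| ≤ 1 := by
    filter_upwards [Metric.tendsto_nhds.1 hδ₀ 1 one_pos] with n hn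
    simpa using hn.le
  have hK1 : IsCompact (Metric.cthickening 1 K) := hK.cthickening
  refine Tendsto.congr' hunfold (tendsto_integral_filter_of_dominated_convergence
    ((Metric.cthickening 1 K).indicator fun _ => M) ?_ ?_ ?_ ?_)
  · exact Eventually.of_forall fun n => (continuous_parametric_integral_of_continuous
      (hcont (p n) (δ n)) isCompact_Ycube).aestronglyMeasurable
  · filter_upwards [hδ1] with n hn
    refine Eventually.of_forall fun x => ?_
    by_cases hx : x ∈ Metric.cthickening 1 K
    · rw [Set.indicator_of_mem hx]
      exact abs_setIntegral_Ycube_le fun s _ => hM _ _ _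
    · rw [Set.indicator_of_notMem hx, setIntegral_eq_zero_of_forall_eq_zero, norm_zero]
      exact fun s hs => hFK _ _ (notMem_of_notMem_cthickening hn hx hs) _
  · exact (integrable_indicator_iff hK1.measurableSet).2 (integrableOn_const hK1.measure_lt_top.ne)
  · exact Eventually.of_forall fun x =>
      tendsto_setIntegral_Ycube_of_periodic hF hper hp hδ₀ x _

lemma abs_integral_mul_sub_integral_mul_le {α : Type*} [MeasurableSpace α] {ν : Measure α}
    {φ ψ a : α → ℝ} {M : ℝ} (hφ : Integrable φ ν) (hψ : Integrable ψ ν)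
    (ha : AEStronglyMeasurable a ν) (hM : ∀ x, |a x| ≤ M) :
    |(∫ x, φ x * a x ∂ν) - ∫ x, ψ x * a x ∂ν| ≤ M * ∫ x, ‖φ x - ψ x‖ ∂ν := by
  have hbdd : ∀ᵐ x ∂ν, ‖a x‖ ≤ M := Eventually.of_forall hM
  rw [← integral_sub (hφ.mul_bdd ha hbdd) (hψ.mul_bdd ha hbdd), ← integral_const_mul,
    ← Real.norm_eq_abs]
  refine norm_integral_le_of_norm_le ((hφ.sub hψ).norm.const_mul M)
    (Eventually.of_forall fun x => ?_)
  rw [← sub_mul, norm_mul, mul_comm]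
  exact mul_le_mul_of_nonneg_right (hM x) (norm_nonneg _)

lemma tendsto_integral_mul_of_forall_hasCompactSupport {α : Type*} [TopologicalSpace α]
    [NormalSpace α] [R1Space α] [WeaklyLocallyCompactSpace α] [MeasurableSpace α] [BorelSpace α]
    {ν : Measure α} [ν.Regular] {a : ι → α → ℝ} {a₀ : α → ℝ} {M : ℝ}
    (ha : ∀ n, AEStronglyMeasurable (a n) ν) (ha₀ : AEStronglyMeasurable a₀ ν)
    (hM : ∀ n x, |a n x| ≤ M) (hM₀ : ∀ x, |a₀ x| ≤ M)
    (hlim : ∀ φ : α → ℝ, Continuous φ → HasCompactSupport φ →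
      Tendsto (fun n => ∫ x, φ x * a n x ∂ν) l (𝓝 (∫ x, φ x * a₀ x ∂ν)))
    {φ : α → ℝ} (hφ : Integrable φ ν) :
    Tendsto (fun n => ∫ x, φ x * a n x ∂ν) l (𝓝 (∫ x, φ x * a₀ x ∂ν)) := by
  rw [Metric.tendsto_nhds]
  intro η hη
  obtain ⟨ψ, hψs, hφψ, hψc, hψi⟩ :=
    hφ.exists_hasCompactSupport_integral_sub_le (ε := η / (3 * (|M| + 1))) (by positivity)
  have hsmall : M * ∫ x, ‖φ x - ψ x‖ ∂ν ≤ η / 3 := by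
    calc M * ∫ x, ‖φ x - ψ x‖ ∂ν ≤ (|M| + 1) * (η / (3 * (|M| + 1))) := by
          gcongr
          linarith [le_abs_self M]
      _ = η / 3 := by field_simp
  filter_upwards [Metric.tendsto_nhds.1 (hlim ψ hψc hψs) (η / 3) (by positivity)] with n hn
  have hn_close := (abs_integral_mul_sub_integral_mul_le hφ hψi (ha n) (hM n)).trans hsmall
  have h₀_close := (abs_integral_mul_sub_integral_mul_le hφ hψi ha₀ hM₀).trans hsmall
  rw [Real.dist_eq, abs_lt] at hn ⊢
  rw [abs_le] at hn_close h₀_close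
  constructor <;> linarith

theorem tendsto_setIntegral_of_periodic [l.IsCountablyGenerated]
    (hF : Continuous fun q : P × (Fin N → ℝ) × (Fin N → ℝ) => F q.1 q.2.1 q.2.2)
    (hper : ∀ e x, ZPeriodic (F e x)) {M : ℝ} (hM : ∀ e x y, |F e x y| ≤ M)
    (hp : Tendsto p l (𝓝 p₀)) (hδ : Tendsto δ l (𝓝[≠] 0))
    {Q : Set (Fin N → ℝ)} (hQ : MeasurableSet Q) (hQv : volume Q ≠ ∞) :
    Tendsto (fun n => ∫ x in Q, F (p n) x ((δ n)⁻¹ • x)) l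
      (𝓝 (∫ x in Q, ∫ y in Ycube N, F p₀ x y)) := by
  have hF₀ : Continuous fun x => ∫ y in Ycube N, F p₀ x y :=
    continuous_parametric_integral_of_continuous (by unfold Function.uncurry; fun_prop)
      isCompact_Ycube
  have hweak : Tendsto (fun n => ∫ x, Q.indicator 1 x * F (p n) x ((δ n)⁻¹ • x)) l
      (𝓝 (∫ x, Q.indicator 1 x * ∫ y in Ycube N, F p₀ x y)) := by
    refine tendsto_integral_mul_of_forall_hasCompactSupport (M := M)
      (fun n => Continuous.aestronglyMeasurable (by fun_prop)) hF₀.aestronglyMeasurable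
      (fun n x => hM _ _ _) (fun x => abs_setIntegral_Ycube_le fun _ _ => hM _ _ _) ?_
      ((integrable_indicator_iff hQ).2 (integrableOn_const hQv))
    intro φ hφc hφs
    obtain ⟨B, hB⟩ := hφs.exists_bound_of_continuous hφc
    simp only [← integral_const_mul]
    refine tendsto_integral_of_periodic_of_eq_zero_off_compact (M := B * M)
      (F := fun e x y => φ x * F e x y) (by fun_prop)
      (fun e x y k => congrArg (φ x * ·) (hper e x y k)) (fun e x y => ?_) hφs
      (fun e x hx y => by simp only [image_eq_zero_of_notMem_tsupport hx, zero_mul]) hp hδ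
    rw [abs_mul]
    exact mul_le_mul (hB x) (hM e x y) (abs_nonneg _) ((norm_nonneg _).trans (hB x))
  have hind : ∀ u : (Fin N → ℝ) → ℝ, ∫ x, Q.indicator 1 x * u x = ∫ x in Q, u x := fun u => by
    simp only [← integral_indicator hQ, ← Set.indicator_mul_left, Pi.one_apply, one_mul]
  simpa only [hind] using hweak

end Averaging

section RandomAveraging

variable {Ω : Type*} [MeasurableSpace Ω] {μ : Measure Ω}

lemma aestronglyMeasurable_comp_of_ae_continuous {α Z : Type*} [MeasurableSpace α]
    {ν : Measure α} [TopologicalSpace Z] [TopologicalSpace.MetrizableSpace Z] [MeasurableSpace Z]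
    [SecondCountableTopology Z] [OpensMeasurableSpace Z] {u : Z → Ω → ℝ}
    (hu : ∀ z, Measurable (u z)) (hc : ∀ᵐ ω ∂μ, Continuous fun z => u z ω)
    {z : α → Z} (hz : Measurable z) {o : α → Ω} (ho : Measure.QuasiMeasurePreserving o ν μ) :
    AEStronglyMeasurable (fun a => u (z a) (o a)) ν := by
  obtain ⟨A, hAc, hA, hA₀⟩ := exists_measurable_superset_of_null (ae_iff.1 hc)
  have hmeas : Measurable (Function.uncurry fun z ω => Aᶜ.indicator (u z) ω) := by
    refine measurable_uncurry_of_continuous_of_measurable (fun ω => ?_)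
      (fun z => (hu z).indicator hA.compl)
    by_cases hω : ω ∈ A
    · simpa [hω] using continuous_const
    · simpa [hω] using by_contra fun h => hω (hAc h)
  refine (hmeas.comp (hz.prodMk ho.measurable)).aestronglyMeasurable.congr ?_
  filter_upwards [ho.ae (measure_eq_zero_iff_ae_notMem.1 hA₀)] with a ha
  exact Set.indicator_of_mem (s := Aᶜ) ha _

theorem tendsto_setIntegral_integral_of_periodic {N : ℕ} {ι P : Type*} [TopologicalSpace P]
    [FirstCountableTopology P] {l : Filter ι} [l.IsCountablyGenerated] [SFinite μ]
    {h : P → (Fin N → ℝ) → Ω → (Fin N → ℝ) → ℝ} {bound : Ω → ℝ}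
    (hmeas : ∀ e x y, AEStronglyMeasurable (fun ω => h e x ω y) μ)
    (hmeas_prod : ∀ e x, AEStronglyMeasurable (fun q : (Fin N → ℝ) × Ω => h e x q.2 q.1)
      ((volume.restrict (Ycube N)).prod μ))
    (hcont : ∀ᵐ ω ∂μ, Continuous fun q : P × (Fin N → ℝ) × (Fin N → ℝ) => h q.1 q.2.1 ω q.2.2)
    (hper : ∀ᵐ ω ∂μ, ∀ e x, ZPeriodic (h e x ω))
    (hbound : ∀ᵐ ω ∂μ, ∀ e x y, |h e x ω y| ≤ bound ω) (hint : Integrable bound μ)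
    {p : ι → P} {p₀ : P} (hp : Tendsto p l (𝓝 p₀)) {δ : ι → ℝ} (hδ : Tendsto δ l (𝓝[≠] 0))
    {Q : Set (Fin N → ℝ)} (hQ : MeasurableSet Q) (hQv : volume Q ≠ ∞) :
    Tendsto (fun n => ∫ x in Q, ∫ ω, h (p n) x ω ((δ n)⁻¹ • x) ∂μ) l
      (𝓝 (∫ x in Q, ∫ ω, (∫ y in Ycube N, h p₀ x ω y) ∂μ)) := by
  have hbound' : ∀ e x y, ∀ᵐ ω ∂μ, ‖h e x ω y‖ ≤ bound ω :=
    fun e x y => hbound.mono fun ω hω => hω e x y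
  have hswap : ∀ x,
      ∫ y in Ycube N, ∫ ω, h p₀ x ω y ∂μ = ∫ ω, (∫ y in Ycube N, h p₀ x ω y) ∂μ := by
    intro x
    have : IsFiniteMeasure (volume.restrict (Ycube N)) :=
      isFiniteMeasure_restrict.2 isCompact_Ycube.measure_lt_top.ne
    refine integral_integral_swap ((hint.comp_snd _).mono' (hmeas_prod p₀ x) ?_)
    filter_upwards [Measure.quasiMeasurePreserving_snd.ae hbound] with q hq
    exact hq p₀ x q.1
  simp only [← hswap]
  refine tendsto_setIntegral_of_periodic (F := fun e x y => ∫ ω, h e x ω y ∂μ)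
    (M := ∫ ω, bound ω ∂μ) ?_ ?_ ?_ hp hδ hQ hQv
  · exact continuous_of_dominated (fun q => hmeas _ _ _) (fun q => hbound' _ _ _) hint hcont
  · exact fun e x y k => integral_congr_ae (hper.mono fun ω hω => hω e x y k)
  · exact fun e x y => norm_integral_le_of_norm_le hint (hbound' e x y)

end RandomAveraging

section Growth

variable {Φ : ℝ → ℝ} {Ω : Type*} [MeasurableSpace Ω] {μ : Measure Ω} {u v : Ω → ℝ}

lemma IsYoung.monotoneOn (hΦ : IsYoung Φ) : MonotoneOn Φ (Set.Ici 0) := by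
  obtain ⟨-, hconv, h0, -, hnonneg, -, -⟩ := hΦ
  intro s hs t ht hst
  rcases (Set.mem_Ici.1 hs).eq_or_lt with rfl | hs'
  · exact h0.trans_le (hnonneg t ht)
  · exact hconv.le_right_of_left_le'' Set.self_mem_Ici ht hs' hst (h0.trans_le (hnonneg s hs))

lemma nonneg_of_monotoneOn_Ici (hΦ : MonotoneOn Φ (Set.Ici 0)) (h0 : 0 ≤ Φ 0) {t : ℝ}
    (ht : 0 ≤ t) : 0 ≤ Φ t :=
  h0.trans (hΦ Set.self_mem_Ici ht ht)

lemma measurable_comp_of_monotoneOn_Ici (hΦ : MonotoneOn Φ (Set.Ici 0)) (hu : Measurable u)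
    (hu0 : ∀ ω, 0 ≤ u ω) : Measurable fun ω => Φ (u ω) := by
  have hmono : Monotone fun t => Φ (max t 0) := fun s t hst =>
    hΦ (le_max_right s 0) (le_max_right t 0) (max_le_max_right 0 hst)
  simpa only [Function.comp_def, max_eq_left (hu0 _)] using hmono.measurable.comp hu

lemma integrable_comp_of_le (hΦ : MonotoneOn Φ (Set.Ici 0)) (h0 : 0 ≤ Φ 0) (hu : Measurable u)
    (hu0 : ∀ ω, 0 ≤ u ω) (huv : ∀ ω, u ω ≤ v ω) (hv : Integrable (fun ω => Φ (v ω)) μ) :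
    Integrable (fun ω => Φ (u ω)) μ := by
  refine hv.mono' (measurable_comp_of_monotoneOn_Ici hΦ hu hu0).aestronglyMeasurable
    (Eventually.of_forall fun ω => ?_)
  rw [Real.norm_of_nonneg (nonneg_of_monotoneOn_Ici hΦ h0 (hu0 ω))]
  exact hΦ (hu0 ω) ((hu0 ω).trans (huv ω)) (huv ω)

lemma integrable_comp_abs_of_lintegral_lt_top (hΦ : MonotoneOn Φ (Set.Ici 0)) (h0 : 0 ≤ Φ 0)
    (hu : Measurable u) (h : ∫⁻ ω, ENNReal.ofReal (Φ |u ω|) ∂μ < ∞) :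
    Integrable (fun ω => Φ |u ω|) μ :=
  ⟨(measurable_comp_of_monotoneOn_Ici hΦ hu.abs fun _ => abs_nonneg _).aestronglyMeasurable,
    (hasFiniteIntegral_iff_ofReal (ae_of_all _ fun _ =>
      nonneg_of_monotoneOn_Ici hΦ h0 (abs_nonneg _))).2 h⟩

lemma Delta2.exists_le_mul_add (h2 : Delta2 Φ) (hΦ : MonotoneOn Φ (Set.Ici 0)) (h0 : 0 ≤ Φ 0) :
    ∃ a b : ℝ, ∀ t, 0 ≤ t → Φ (2 * t) ≤ a * Φ t + b := by
  obtain ⟨α, hα, t₀, ht₀, hα₂⟩ := h2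
  refine ⟨α, Φ (2 * t₀), fun t ht => ?_⟩
  rcases le_total t₀ t with hlarge | hsmall
  · have := nonneg_of_monotoneOn_Ici hΦ h0 (t := 2 * t₀) (by positivity)
    linarith [hα₂ t hlarge]
  · have hle : Φ (2 * t) ≤ Φ (2 * t₀) :=
      hΦ (Set.mem_Ici.2 (by positivity)) (Set.mem_Ici.2 (by positivity)) (by gcongr)
    have := mul_nonneg hα.le (nonneg_of_monotoneOn_Ici hΦ h0 ht)
    linarith

variable [IsFiniteMeasure μ]

lemma Delta2.integrable_comp_two_mul (h2 : Delta2 Φ) (hΦ : MonotoneOn Φ (Set.Ici 0))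
    (h0 : 0 ≤ Φ 0) (hu : Measurable u) (hu0 : ∀ ω, 0 ≤ u ω)
    (hint : Integrable (fun ω => Φ (u ω)) μ) : Integrable (fun ω => Φ (2 * u ω)) μ := by
  have h2u : ∀ ω, 0 ≤ 2 * u ω := fun ω => mul_nonneg zero_le_two (hu0 ω)
  obtain ⟨a, b, hab⟩ := h2.exists_le_mul_add hΦ h0
  refine ((hint.const_mul a).add (integrable_const b)).mono'
    (measurable_comp_of_monotoneOn_Ici hΦ (hu.const_mul 2) h2u).aestronglyMeasurable
    (Eventually.of_forall fun ω => ?_)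
  rw [Real.norm_of_nonneg (nonneg_of_monotoneOn_Ici hΦ h0 (h2u ω))]
  exact hab (u ω) (hu0 ω)

lemma Delta2.integrable_comp_const_mul (h2 : Delta2 Φ) (hΦ : MonotoneOn Φ (Set.Ici 0))
    (h0 : 0 ≤ Φ 0) (hu : Measurable u) (hu0 : ∀ ω, 0 ≤ u ω)
    (hint : Integrable (fun ω => Φ (u ω)) μ) {C : ℝ} (hC : 0 ≤ C) :
    Integrable (fun ω => Φ (C * u ω)) μ := by
  have hpow : ∀ n : ℕ, Integrable (fun ω => Φ (2 ^ n * u ω)) μ := by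
    intro n
    induction n with
    | zero => simpa using hint
    | succ n ih =>
      simpa only [pow_succ', mul_assoc] using h2.integrable_comp_two_mul hΦ h0
        (hu.const_mul _) (fun ω => mul_nonneg (by positivity) (hu0 ω)) ih
  obtain ⟨n, hn⟩ := pow_unbounded_of_one_lt C one_lt_two
  exact integrable_comp_of_le hΦ h0 (hu.const_mul C) (fun ω => mul_nonneg hC (hu0 ω))
    (fun ω => mul_le_mul_of_nonneg_right hn.le (hu0 ω)) (hpow n)

lemma Delta2.integrable_comp_add (h2 : Delta2 Φ) (hΦ : MonotoneOn Φ (Set.Ici 0))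
    (h0 : 0 ≤ Φ 0) (hu : Measurable u) (hu0 : ∀ ω, 0 ≤ u ω) (hv : Measurable v)
    (hv0 : ∀ ω, 0 ≤ v ω) (hui : Integrable (fun ω => Φ (u ω)) μ)
    (hvi : Integrable (fun ω => Φ (v ω)) μ) : Integrable (fun ω => Φ (u ω + v ω)) μ := by
  have hmax : Integrable (fun ω => Φ (2 * max (u ω) (v ω))) μ := by
    refine h2.integrable_comp_two_mul hΦ h0 (hu.max hv) (fun ω => le_max_of_le_left (hu0 ω)) ?_
    refine (hui.sup hvi).congr (Eventually.of_forall fun ω => ?_)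
    exact (hΦ.map_sup (hu0 ω) (hv0 ω)).symm
  exact integrable_comp_of_le hΦ h0 (hu.add hv) (fun ω => add_nonneg (hu0 ω) (hv0 ω))
    (fun ω => by linarith [le_max_left (u ω) (v ω), le_max_right (u ω) (v ω)]) hmax

lemma Delta2.integrable_comp_sum (h2 : Delta2 Φ) (hΦ : MonotoneOn Φ (Set.Ici 0))
    (h0 : 0 ≤ Φ 0) {ι : Type*} (s : Finset ι) {u : ι → Ω → ℝ} (hu : ∀ i, Measurable (u i))
    (hu0 : ∀ i ω, 0 ≤ u i ω) (hint : ∀ i, Integrable (fun ω => Φ (u i ω)) μ) :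
    Integrable (fun ω => Φ (∑ i ∈ s, u i ω)) μ := by
  classical
  induction s using Finset.induction_on with
  | empty => simp
  | insert i s hi ih =>
    simp only [Finset.sum_insert hi]
    exact h2.integrable_comp_add hΦ h0 (hu i) (hu0 i)
      (Finset.measurable_fun_sum s fun j _ => hu j)
      (fun ω => Finset.sum_nonneg fun j _ => hu0 j ω) (hint i) ih

end Growth

section EuclideanNorm

variable {N : ℕ}

lemma enorm2_nonneg (v : Fin N → ℝ) : 0 ≤ enorm2 v := Real.sqrt_nonneg _

lemma abs_apply_le_enorm2 (v : Fin N → ℝ) (j : Fin N) : |v j| ≤ enorm2 v :=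
  Real.abs_le_sqrt (Finset.single_le_sum (f := fun i => v i ^ 2) (fun i _ => sq_nonneg (v i))
    (Finset.mem_univ j))

lemma enorm2_le_sum_abs (v : Fin N → ℝ) : enorm2 v ≤ ∑ j, |v j| := by
  refine Real.sqrt_le_iff.2 ⟨Finset.sum_nonneg fun j _ => abs_nonneg _, ?_⟩
  simpa only [sq_abs] using
    Finset.sum_sq_le_sq_sum_of_nonneg (s := Finset.univ) fun j _ => abs_nonneg (v j)

end EuclideanNorm

/-- A random field `u e x ω y` with parameter `e`, macroscopic variable `x` and fast variable `y`:
it is a Carathéodory function of `ω` and `(e, x, y)`, is `ℤ^N`-periodic in `y`, and is dominated by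
a multiple of the weight `S ω`, uniformly in `(e, x, y)`. -/
structure IsPeriodicField {N : ℕ} {Ω P : Type*} [MeasurableSpace Ω] [TopologicalSpace P]
    (S : Ω → ℝ) (u : P → (Fin N → ℝ) → Ω → (Fin N → ℝ) → ℝ) : Prop where
  measurable : ∀ e x y, Measurable fun ω => u e x ω y
  continuous : ∀ ω, Continuous fun q : P × (Fin N → ℝ) × (Fin N → ℝ) => u q.1 q.2.1 ω q.2.2
  zperiodic : ∀ e x ω, ZPeriodic (u e x ω)
  exists_abs_le : ∃ C, 0 ≤ C ∧ ∀ e x ω y, |u e x ω y| ≤ C * S ω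

namespace IsPeriodicField

variable {N : ℕ} {Ω P : Type*} [MeasurableSpace Ω] [TopologicalSpace P] {S : Ω → ℝ}
  {u v : P → (Fin N → ℝ) → Ω → (Fin N → ℝ) → ℝ}

lemma measurable_uncurry (hu : IsPeriodicField S u) (e : P) (x : Fin N → ℝ) :
    Measurable fun q : (Fin N → ℝ) × Ω => u e x q.2 q.1 :=
  measurable_uncurry_of_continuous_of_measurable
    (fun ω => (hu.continuous ω).comp (by fun_prop : Continuous fun y => (e, x, y)))
    (hu.measurable e x)

lemma of_parameter {a : P → ℝ} (ha : Continuous a) {C : ℝ} (hC : 0 ≤ C) (haC : ∀ e, |a e| ≤ C) :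
    IsPeriodicField (N := N) (fun _ : Ω => 1) fun e _ _ _ => a e where
  measurable _ _ _ := measurable_const
  continuous _ := by fun_prop
  zperiodic _ _ _ _ _ := rfl
  exists_abs_le := ⟨C, hC, fun e _ _ _ => by simpa using haC e⟩

lemma of_hasCompactSupport {φ : (Fin N → ℝ) → ℝ} (hφ : Continuous φ) (hs : HasCompactSupport φ) :
    IsPeriodicField (P := P) (fun _ : Ω => 1) fun _ x _ _ => φ x where
  measurable _ _ _ := measurable_const
  continuous _ := by fun_prop
  zperiodic _ _ _ _ _ := rfl
  exists_abs_le := by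
    obtain ⟨C, hC⟩ := hs.exists_bound_of_continuous hφ
    exact ⟨C, (norm_nonneg _).trans (hC 0), fun _ x _ _ => by simpa using hC x⟩

lemma of_hasCompactSupport_fderiv {φ : (Fin N → ℝ) → ℝ} (hφ : ContDiff ℝ 1 φ)
    (hs : HasCompactSupport φ) (v : Fin N → ℝ) :
    IsPeriodicField (P := P) (fun _ : Ω => 1) fun _ x _ _ => fderiv ℝ φ x v :=
  .of_hasCompactSupport ((hφ.continuous_fderiv one_ne_zero).clm_apply continuous_const)
    (hs.fderiv_apply ℝ v)

lemma of_zperiodic {g : (Fin N → ℝ) → ℝ} (hg : Continuous g) (hper : ZPeriodic g) :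
    IsPeriodicField (P := P) (fun _ : Ω => 1) fun _ _ _ y => g y where
  measurable _ _ _ := measurable_const
  continuous _ := by fun_prop
  zperiodic _ _ _ := hper
  exists_abs_le := by
    obtain ⟨C, hC⟩ := hper.exists_abs_le hg
    exact ⟨C, (abs_nonneg _).trans (hC 0), fun _ _ _ y => by simpa using hC y⟩

lemma of_random {w : Ω → ℝ} (hw : Measurable w) {C : ℝ} (hC : 0 ≤ C)
    (hwC : ∀ ω, |w ω| ≤ C * S ω) :
    IsPeriodicField (N := N) (P := P) S fun _ _ ω _ => w ω where
  measurable _ _ _ := hw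
  continuous _ := continuous_const
  zperiodic _ _ _ _ _ := rfl
  exists_abs_le := ⟨C, hC, fun _ _ ω _ => hwC ω⟩

lemma mono {R : Ω → ℝ} (hu : IsPeriodicField S u) (hSR : ∀ ω, S ω ≤ R ω) :
    IsPeriodicField R u where
  __ := hu
  exists_abs_le := by
    obtain ⟨C, hC, huC⟩ := hu.exists_abs_le
    exact ⟨C, hC, fun e x ω y => (huC e x ω y).trans (mul_le_mul_of_nonneg_left (hSR ω) hC)⟩

lemma add (hu : IsPeriodicField S u) (hv : IsPeriodicField S v) :
    IsPeriodicField S fun e x ω y => u e x ω y + v e x ω y where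
  measurable e x y := (hu.measurable e x y).add (hv.measurable e x y)
  continuous ω := (hu.continuous ω).add (hv.continuous ω)
  zperiodic e x ω y k := congrArg₂ (· + ·) (hu.zperiodic e x ω y k) (hv.zperiodic e x ω y k)
  exists_abs_le := by
    obtain ⟨C, hC, huC⟩ := hu.exists_abs_le
    obtain ⟨D, hD, hvD⟩ := hv.exists_abs_le
    refine ⟨C + D, add_nonneg hC hD, fun e x ω y => (abs_add_le _ _).trans ?_⟩
    rw [add_mul]
    exact add_le_add (huC e x ω y) (hvD e x ω y)

lemma mul (hu : IsPeriodicField (fun _ => 1) u) (hv : IsPeriodicField S v) :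
    IsPeriodicField S fun e x ω y => u e x ω y * v e x ω y where
  measurable e x y := (hu.measurable e x y).mul (hv.measurable e x y)
  continuous ω := (hu.continuous ω).mul (hv.continuous ω)
  zperiodic e x ω y k := congrArg₂ (· * ·) (hu.zperiodic e x ω y k) (hv.zperiodic e x ω y k)
  exists_abs_le := by
    obtain ⟨C, hC, huC⟩ := hu.exists_abs_le
    obtain ⟨D, hD, hvD⟩ := hv.exists_abs_le
    refine ⟨C * D, mul_nonneg hC hD, fun e x ω y => ?_⟩
    rw [abs_mul, mul_assoc]
    exact mul_le_mul ((huC e x ω y).trans_eq (mul_one C)) (hvD e x ω y) (abs_nonneg _) hC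

lemma sum {ι : Type*} (s : Finset ι) {u : ι → P → (Fin N → ℝ) → Ω → (Fin N → ℝ) → ℝ}
    (hu : ∀ i, IsPeriodicField S (u i)) :
    IsPeriodicField S fun e x ω y => ∑ i ∈ s, u i e x ω y where
  measurable e x y := Finset.measurable_fun_sum s fun i _ => (hu i).measurable e x y
  continuous ω := continuous_finsetSum s fun i _ => (hu i).continuous ω
  zperiodic e x ω y k := Finset.sum_congr rfl fun i _ => (hu i).zperiodic e x ω y k
  exists_abs_le := by
    choose C hC huC using fun i => (hu i).exists_abs_le
    refine ⟨∑ i ∈ s, C i, Finset.sum_nonneg fun i _ => hC i, fun e x ω y => ?_⟩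
    rw [Finset.sum_mul]
    exact (Finset.abs_sum_le_sum_abs _ _).trans (Finset.sum_le_sum fun i _ => huC i e x ω y)

lemma exists_enorm2_le {L : P → (Fin N → ℝ) → Ω → (Fin N → ℝ) → Fin N → ℝ}
    (hL : ∀ j, IsPeriodicField S fun e x ω y => L e x ω y j) :
    ∃ C, 0 ≤ C ∧ ∀ e x ω y, enorm2 (L e x ω y) ≤ C * S ω := by
  choose C hC hLC using fun j => (hL j).exists_abs_le
  refine ⟨∑ j, C j, Finset.sum_nonneg fun j _ => hC j, fun e x ω y => ?_⟩
  rw [Finset.sum_mul]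
  exact (enorm2_le_sum_abs _).trans (Finset.sum_le_sum fun j _ => hLC j e x ω y)

end IsPeriodicField

/-- A random integrand `f x ω y λ`: Carathéodory in `ω` and `(x, y, λ)`, `ℤ^N`-periodic in `y`, and
of growth at most `Φ` in `λ`. -/
structure IsPeriodicIntegrand {N : ℕ} {Ω : Type*} [MeasurableSpace Ω] (μ : Measure Ω)
    (Φ : ℝ → ℝ) (f : (Fin N → ℝ) → Ω → (Fin N → ℝ) → (Fin N → ℝ) → ℝ) : Prop where
  measurable : ∀ x y lam, Measurable fun ω => f x ω y lam
  ae_continuous : ∀ᵐ ω ∂μ, Continuous fun q : (Fin N → ℝ) × (Fin N → ℝ) × (Fin N → ℝ) =>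
    f q.1 ω q.2.1 q.2.2
  ae_zperiodic : ∀ᵐ ω ∂μ, ∀ x lam, ZPeriodic fun y => f x ω y lam
  exists_ae_abs_le : ∃ c, 0 ≤ c ∧
    ∀ᵐ ω ∂μ, ∀ x y lam, |f x ω y lam| ≤ c * (1 + Φ (enorm2 lam))

lemma ae_forall_forall_mem_of_ae_prod {Ω Y X κ : Type*} [MeasurableSpace Ω] {μ : Measure Ω}
    [TopologicalSpace Y] [MeasurableSpace Y] {ν : Measure Y} [SFinite ν] [ν.IsOpenPosMeasure]
    [TopologicalSpace X] {u : κ → Ω → Y → X} {K : κ → Set X} (hK : ∀ i, IsClosed (K i))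
    (hu : ∀ᵐ ω ∂μ, ∀ i, Continuous (u i ω)) (h : ∀ᵐ p ∂(μ.prod ν), ∀ i, u i p.1 p.2 ∈ K i) :
    ∀ᵐ ω ∂μ, ∀ i y, u i ω y ∈ K i := by
  filter_upwards [Measure.ae_ae_of_ae_prod h, hu] with ω hω hc i y
  have hdense : Dense (u i ω ⁻¹' K i) := Measure.dense_of_ae (hω.mono fun y hy => hy i)
  exact ((hK i).preimage (hc i)).closure_subset (hdense y)

namespace IsPeriodicIntegrand

variable {N : ℕ} {Ω P : Type*} [MeasurableSpace Ω] {μ : Measure Ω} [TopologicalSpace P]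
  {Φ : ℝ → ℝ} {f : (Fin N → ℝ) → Ω → (Fin N → ℝ) → (Fin N → ℝ) → ℝ} {S : Ω → ℝ}
  {L : P → (Fin N → ℝ) → Ω → (Fin N → ℝ) → Fin N → ℝ}

lemma aestronglyMeasurable_comp (hf : IsPeriodicIntegrand μ Φ f) {α : Type*} [MeasurableSpace α]
    {ν : Measure α} {o : α → Ω} (ho : Measure.QuasiMeasurePreserving o ν μ)
    {z : α → (Fin N → ℝ) × (Fin N → ℝ) × (Fin N → ℝ)} (hz : Measurable z) :
    AEStronglyMeasurable (fun a => f (z a).1 (o a) (z a).2.1 (z a).2.2) ν :=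
  aestronglyMeasurable_comp_of_ae_continuous (u := fun q ω => f q.1 ω q.2.1 q.2.2)
    (fun _ => hf.measurable _ _ _) hf.ae_continuous hz ho

lemma aestronglyMeasurable_comp_field (hf : IsPeriodicIntegrand μ Φ f)
    (hL : ∀ j, IsPeriodicField S fun e x ω y => L e x ω y j) (e : P) (x y : Fin N → ℝ) :
    AEStronglyMeasurable (fun ω => f x ω y (L e x ω y)) μ :=
  hf.aestronglyMeasurable_comp (Measure.QuasiMeasurePreserving.id μ)
    (z := fun ω => (x, y, L e x ω y)) (measurable_const.prodMk (measurable_const.prodMk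
      (measurable_pi_lambda _ fun j => (hL j).measurable e x y)))

lemma exists_ae_abs_comp_field_le (hf : IsPeriodicIntegrand μ Φ f)
    (hΦ : MonotoneOn Φ (Set.Ici 0))
    (hL : ∀ j, IsPeriodicField S fun e x ω y => L e x ω y j) :
    ∃ c C, 0 ≤ C ∧ ∀ᵐ ω ∂μ, ∀ e x y, |f x ω y (L e x ω y)| ≤ c * (1 + Φ (C * S ω)) := by
  obtain ⟨c, hc, hfc⟩ := hf.exists_ae_abs_le
  obtain ⟨C, hC, hLC⟩ := IsPeriodicField.exists_enorm2_le hL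
  refine ⟨c, C, hC, hfc.mono fun ω hω e x y => (hω x y _).trans ?_⟩
  have hnonneg := enorm2_nonneg (L e x ω y)
  have hle := hLC e x ω y
  gcongr
  exact hΦ hnonneg (hnonneg.trans hle) hle

theorem tendsto_setIntegral_integral_comp_field (hf : IsPeriodicIntegrand μ Φ f)
    [IsFiniteMeasure μ] [FirstCountableTopology P] {ι : Type*} {l : Filter ι}
    [l.IsCountablyGenerated] (hΦ : MonotoneOn Φ (Set.Ici 0))
    (hS : ∀ C, 0 ≤ C → Integrable (fun ω => Φ (C * S ω)) μ)
    (hL : ∀ j, IsPeriodicField S fun e x ω y => L e x ω y j)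
    {p : ι → P} {p₀ : P} (hp : Tendsto p l (𝓝 p₀)) {δ : ι → ℝ} (hδ : Tendsto δ l (𝓝[≠] 0))
    {Q : Set (Fin N → ℝ)} (hQ : MeasurableSet Q) (hQv : volume Q ≠ ∞) :
    Tendsto (fun n => ∫ x in Q, ∫ ω, f x ω ((δ n)⁻¹ • x) (L (p n) x ω ((δ n)⁻¹ • x)) ∂μ) l
      (𝓝 (∫ x in Q, ∫ ω, (∫ y in Ycube N, f x ω y (L p₀ x ω y)) ∂μ)) := by
  obtain ⟨c, C, hC, hbound⟩ := hf.exists_ae_abs_comp_field_le hΦ hL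
  refine tendsto_setIntegral_integral_of_periodic (h := fun e x ω y => f x ω y (L e x ω y))
    (hf.aestronglyMeasurable_comp_field hL) (fun e x => ?_) ?_ ?_ hbound
    (((integrable_const 1).add (hS C hC)).const_mul c) hp hδ hQ hQv
  · exact hf.aestronglyMeasurable_comp Measure.quasiMeasurePreserving_snd
      (z := fun q => (x, q.1, L e x q.2 q.1)) (measurable_const.prodMk (measurable_fst.prodMk
        (measurable_pi_lambda _ fun j => (hL j).measurable_uncurry e x)))
  · filter_upwards [hf.ae_continuous] with ω hω
    have hLω : Continuous fun q : P × (Fin N → ℝ) × (Fin N → ℝ) => L q.1 q.2.1 ω q.2.2 :=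
      continuous_pi fun j => (hL j).continuous ω
    exact hω.comp (by fun_prop : Continuous fun q : P × (Fin N → ℝ) × (Fin N → ℝ) =>
      (q.2.1, q.2.2, L q.1 q.2.1 ω q.2.2))
  · filter_upwards [hf.ae_zperiodic] with ω hω e x y k
    have hLk : L e x ω (y + fun i => (k i : ℝ)) = L e x ω y :=
      funext fun j => (hL j).zperiodic e x ω y k
    exact (congrArg (f x ω _) hLk).trans (hω x _ y k)

lemma of_ae_prod_bounds [SFinite μ] (hΦ : ∀ t, 0 ≤ t → 0 ≤ Φ t)
    (hmeas : ∀ x lam, Measurable fun p : Ω × (Fin N → ℝ) => f x p.1 p.2 lam)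
    (hcont : ∀ᵐ ω ∂μ, Continuous fun q : (Fin N → ℝ) × (Fin N → ℝ) × (Fin N → ℝ) =>
      f q.1 ω q.2.1 q.2.2)
    (hper : ∀ᵐ ω ∂μ, ∀ x lam, ZPeriodic fun y => f x ω y lam)
    {c₁ c₂ : ℝ} (hc₁ : 0 ≤ c₁) (hc₂ : 0 ≤ c₂)
    (hbounds : ∀ᵐ p ∂(μ.prod (volume : Measure (Fin N → ℝ))), ∀ x lam : Fin N → ℝ,
      c₁ * Φ (enorm2 lam) ≤ f x p.1 p.2 lam ∧ f x p.1 p.2 lam ≤ c₂ * (1 + Φ (enorm2 lam))) :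
    IsPeriodicIntegrand μ Φ f where
  measurable x y lam := (hmeas x lam).comp measurable_prodMk_right
  ae_continuous := hcont
  ae_zperiodic := hper
  exists_ae_abs_le := by
    have hall := ae_forall_forall_mem_of_ae_prod (κ := (Fin N → ℝ) × (Fin N → ℝ))
      (u := fun i ω y => f i.1 ω y i.2) (fun i => isClosed_Icc)
      (hcont.mono fun ω hω i => hω.comp (by fun_prop : Continuous fun y => (i.1, y, i.2)))
      (hbounds.mono fun p hp i => hp i.1 i.2)
    refine ⟨c₂, hc₂, hall.mono fun ω hω x y lam => ?_⟩
    obtain ⟨hlower, hupper⟩ := hω (x, lam) y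
    rwa [abs_of_nonneg ((mul_nonneg hc₁ (hΦ _ (enorm2_nonneg lam))).trans hlower)]

end IsPeriodicIntegrand

section ProductRule

variable {E : Type*} [NormedAddCommGroup E] [NormedSpace ℝ E] {φ w g : E → ℝ}

lemma fderiv_mul_comp_smul_apply (hφ : Differentiable ℝ φ) (hw : Differentiable ℝ w) (a : ℝ)
    (x v : E) :
    fderiv ℝ (fun z => φ z * w (a • z)) x v =
      fderiv ℝ φ x v * w (a • x) + a * (φ x * fderiv ℝ w (a • x) v) := by
  have hwa : Differentiable ℝ fun z => w (a • z) := by fun_prop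
  rw [fderiv_fun_mul hφ.differentiableAt hwa.differentiableAt, fderiv_comp_smul]
  simp only [add_apply, smul_apply, smul_eq_mul]
  ring

lemma fderiv_mul_comp_smul_mul_comp_smul_apply (hφ : Differentiable ℝ φ)
    (hw : Differentiable ℝ w) (hg : Differentiable ℝ g) (a b : ℝ) (x v : E) :
    fderiv ℝ (fun z => φ z * w (a • z) * g (b • z)) x v =
      fderiv ℝ φ x v * w (a • x) * g (b • x) +
        a * (φ x * fderiv ℝ w (a • x) v * g (b • x)) +
        b * (φ x * w (a • x) * fderiv ℝ g (b • x) v) := by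
  have hφw : Differentiable ℝ fun z => φ z * w (a • z) := by fun_prop
  rw [fderiv_mul_comp_smul_apply hφw hg, fderiv_mul_comp_smul_apply hφ hw]
  ring

variable {ι : Type*} [Fintype ι] {φ w g : ι → E → ℝ}

lemma contDiff_sum_mul_comp_smul {n : WithTop ℕ∞} (hφ : ∀ i, ContDiff ℝ n (φ i))
    (hw : ∀ i, ContDiff ℝ n (w i)) (a : ℝ) :
    ContDiff ℝ n fun z => ∑ i, φ i z * w i (a • z) :=
  ContDiff.sum fun i _ => (hφ i).mul ((hw i).comp (contDiff_const_smul a))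

lemma contDiff_sum_mul_comp_smul_mul_comp_smul {n : WithTop ℕ∞} (hφ : ∀ i, ContDiff ℝ n (φ i))
    (hw : ∀ i, ContDiff ℝ n (w i)) (hg : ∀ i, ContDiff ℝ n (g i)) (a b : ℝ) :
    ContDiff ℝ n fun z => ∑ i, φ i z * w i (a • z) * g i (b • z) :=
  ContDiff.sum fun i _ => ((hφ i).mul ((hw i).comp (contDiff_const_smul a))).mul
    ((hg i).comp (contDiff_const_smul b))

lemma fderiv_sum_mul_comp_smul_apply (hφ : ∀ i, Differentiable ℝ (φ i))
    (hw : ∀ i, Differentiable ℝ (w i)) (a : ℝ) (x v : E) :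
    fderiv ℝ (fun z => ∑ i, φ i z * w i (a • z)) x v =
      (∑ i, fderiv ℝ (φ i) x v * w i (a • x)) +
        a * ∑ i, φ i x * fderiv ℝ (w i) (a • x) v := by
  rw [fderiv_fun_sum fun i _ => by fun_prop, sum_apply, Finset.mul_sum, ← Finset.sum_add_distrib]
  exact Finset.sum_congr rfl fun i _ => fderiv_mul_comp_smul_apply (hφ i) (hw i) a x v

lemma fderiv_sum_mul_comp_smul_mul_comp_smul_apply (hφ : ∀ i, Differentiable ℝ (φ i))
    (hw : ∀ i, Differentiable ℝ (w i)) (hg : ∀ i, Differentiable ℝ (g i)) (a b : ℝ) (x v : E) :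
    fderiv ℝ (fun z => ∑ i, φ i z * w i (a • z) * g i (b • z)) x v =
      (∑ i, fderiv ℝ (φ i) x v * w i (a • x) * g i (b • x)) +
        a * (∑ i, φ i x * fderiv ℝ (w i) (a • x) v * g i (b • x)) +
        b * ∑ i, φ i x * w i (a • x) * fderiv ℝ (g i) (b • x) v := by
  rw [fderiv_fun_sum fun i _ => by fun_prop, sum_apply, Finset.mul_sum, Finset.mul_sum,
    ← Finset.sum_add_distrib, ← Finset.sum_add_distrib]
  exact Finset.sum_congr rfl fun i _ =>
    fderiv_mul_comp_smul_mul_comp_smul_apply (hφ i) (hw i) (hg i) a b x v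

end ProductRule

/-- `G` is the stochastic gradient of `w` along the orbit of `ω`. -/
def HasOrbitGradient {N : ℕ} {Ω : Type*} (T : (Fin N → ℝ) → Ω → Ω) (w : Ω → ℝ)
    (G : Ω → Fin N → ℝ) (ω : Ω) : Prop :=
  ContDiff ℝ 1 (fun y => w (T y ω)) ∧
    ∀ (y : Fin N → ℝ) (i : Fin N),
      fderiv ℝ (fun z => w (T z ω)) y (Pi.single i 1) = G (T y ω) i

/-- The data `ψ₀ = ∑ φ₀ χ`, `ψ₁ = ∑ φ₁ w₁`, `ψ₂ = ∑ φ₂ w₂ g` from which the test functions `φ_ε`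
are built, with `G₁` and `G₂` the stochastic gradients of `w₁` and `w₂`. -/
structure CorrectorData {N : ℕ} {Ω : Type*} [MeasurableSpace Ω] (μ : Measure Ω)
    (T : (Fin N → ℝ) → Ω → Ω) (Φ : ℝ → ℝ) (ι₀ ι₁ ι₂ : Type*) where
  φ₀ : ι₀ → (Fin N → ℝ) → ℝ
  χ : ι₀ → Ω → ℝ
  φ₁ : ι₁ → (Fin N → ℝ) → ℝ
  w₁ : ι₁ → Ω → ℝ
  G₁ : ι₁ → Ω → Fin N → ℝ
  φ₂ : ι₂ → (Fin N → ℝ) → ℝ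
  w₂ : ι₂ → Ω → ℝ
  G₂ : ι₂ → Ω → Fin N → ℝ
  g : ι₂ → (Fin N → ℝ) → ℝ
  contDiff_φ₀ : ∀ i, ContDiff ℝ 1 (φ₀ i)
  hasCompactSupport_φ₀ : ∀ i, HasCompactSupport (φ₀ i)
  measurable_χ : ∀ i, Measurable (χ i)
  ae_χ_comp_eq : ∀ i y, ∀ᵐ ω ∂μ, χ i (T y ω) = χ i ω
  integrable_χ : ∀ i, Integrable (fun ω => Φ |χ i ω|) μ
  contDiff_φ₁ : ∀ i, ContDiff ℝ 1 (φ₁ i)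
  hasCompactSupport_φ₁ : ∀ i, HasCompactSupport (φ₁ i)
  hasBddStochGrad₁ : ∀ i, HasBddStochGrad μ T (w₁ i) (G₁ i)
  contDiff_φ₂ : ∀ i, ContDiff ℝ 1 (φ₂ i)
  hasCompactSupport_φ₂ : ∀ i, HasCompactSupport (φ₂ i)
  hasBddStochGrad₂ : ∀ i, HasBddStochGrad μ T (w₂ i) (G₂ i)
  contDiff_g : ∀ i, ContDiff ℝ 1 (g i)
  zperiodic_g : ∀ i, ZPeriodic (g i)

namespace HasBddStochGrad

variable {N : ℕ} {Ω P : Type*} [MeasurableSpace Ω] [TopologicalSpace P] {μ : Measure Ω}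
  {T : (Fin N → ℝ) → Ω → Ω} {w : Ω → ℝ} {G : Ω → Fin N → ℝ}

lemma ae_forall_hasOrbitGradient {ι : Type*} [Countable ι] {w : ι → Ω → ℝ}
    {G : ι → Ω → Fin N → ℝ} (h : ∀ i, HasBddStochGrad μ T (w i) (G i)) :
    ∀ᵐ ω ∂μ, ∀ i, HasOrbitGradient T (w i) (G i) ω :=
  ae_all_iff.2 fun i => (h i).2.2.2.2

lemma isPeriodicField (h : HasBddStochGrad μ T w G) :
    IsPeriodicField (N := N) (P := P) (fun _ => 1) fun _ _ ω _ => w ω := by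
  obtain ⟨hw, ⟨C, hC⟩, -⟩ := h
  exact .of_random hw (abs_nonneg C) fun ω => by simpa using (hC ω).trans (le_abs_self C)

lemma isPeriodicField_gradient (h : HasBddStochGrad μ T w G) (j : Fin N) :
    IsPeriodicField (N := N) (P := P) (fun _ => 1) fun _ _ ω _ => G ω j := by
  obtain ⟨-, -, hG, ⟨C, hC⟩, -⟩ := h
  refine .of_random (measurable_pi_iff.1 hG j) (abs_nonneg C) fun ω => ?_
  simpa using (abs_apply_le_enorm2 (G ω) j).trans ((hC ω).trans (le_abs_self C))

end HasBddStochGrad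

namespace CorrectorData

variable {N : ℕ} {Ω : Type*} [MeasurableSpace Ω] {μ : Measure Ω} {T : (Fin N → ℝ) → Ω → Ω}
  {Φ : ℝ → ℝ} {ι₀ ι₁ ι₂ : Type*} [Fintype ι₀]

/-- The random weight `1 + ∑ |χ|` dominating the gradients of the test functions. -/
def weight (D : CorrectorData μ T Φ ι₀ ι₁ ι₂) (ω : Ω) : ℝ := 1 + ∑ i, |D.χ i ω|

lemma one_le_weight (D : CorrectorData μ T Φ ι₀ ι₁ ι₂) (ω : Ω) : 1 ≤ D.weight ω :=
  le_add_of_nonneg_right (Finset.sum_nonneg fun _ _ => abs_nonneg _)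

lemma abs_χ_le_weight (D : CorrectorData μ T Φ ι₀ ι₁ ι₂) (i : ι₀) (ω : Ω) :
    |D.χ i ω| ≤ D.weight ω :=
  (Finset.single_le_sum (f := fun i => |D.χ i ω|) (fun _ _ => abs_nonneg _)
    (Finset.mem_univ i)).trans (le_add_of_nonneg_left zero_le_one)

lemma integrable_comp_const_mul_weight [IsFiniteMeasure μ] (D : CorrectorData μ T Φ ι₀ ι₁ ι₂)
    (hΦ : MonotoneOn Φ (Set.Ici 0)) (h0 : 0 ≤ Φ 0) (h2 : Delta2 Φ) {C : ℝ} (hC : 0 ≤ C) :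
    Integrable (fun ω => Φ (C * D.weight ω)) μ := by
  have habs : ∀ i, Measurable fun ω => |D.χ i ω| := fun i => (D.measurable_χ i).abs
  have hsum : Measurable fun ω => ∑ i, |D.χ i ω| :=
    Finset.measurable_fun_sum _ fun i _ => habs i
  refine h2.integrable_comp_const_mul hΦ h0 (hsum.const_add 1)
    (fun ω => zero_le_one.trans (D.one_le_weight ω)) ?_ hC
  exact h2.integrable_comp_add hΦ h0 measurable_const (fun _ => zero_le_one) hsum
    (fun ω => Finset.sum_nonneg fun _ _ => abs_nonneg _) (integrable_const _)
    (h2.integrable_comp_sum hΦ h0 _ habs (fun _ _ => abs_nonneg _) D.integrable_χ)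

variable [Fintype ι₁] [Fintype ι₂]

/-- The test function `φ_ε(z, ω) = ψ₀(z, ω) + ε ψ₁(z, T(z/ε)ω) + ε² ψ₂(z, T(z/ε)ω, z/ε²)`. -/
def testFun (D : CorrectorData μ T Φ ι₀ ι₁ ι₂) (ε : ℝ) (ω : Ω) (z : Fin N → ℝ) : ℝ :=
  (∑ i, D.φ₀ i z * D.χ i ω) + ε * (∑ i, D.φ₁ i z * D.w₁ i (T (ε⁻¹ • z) ω)) +
    ε ^ 2 * (∑ i, D.φ₂ i z * D.w₂ i (T (ε⁻¹ • z) ω) * D.g i ((ε ^ 2)⁻¹ • z))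

/-- The limit gradient `∇_x ψ₀ + D_ω ψ₁ + ∇_y ψ₂`. -/
def limitGradient (D : CorrectorData μ T Φ ι₀ ι₁ ι₂) (x : Fin N → ℝ) (ω : Ω) (y : Fin N → ℝ)
    (j : Fin N) : ℝ :=
  (∑ i, fderiv ℝ (D.φ₀ i) x (Pi.single j 1) * D.χ i ω) + (∑ i, D.φ₁ i x * D.G₁ i ω j) +
    (∑ i, D.φ₂ i x * D.w₂ i ω * fderiv ℝ (D.g i) y (Pi.single j 1))

/-- The gradient of the test function of parameter `e` as a function of the slow variable `x` and
the two fast ones, the shifted realization `ω = T(x/e)ω'` and `y = x/e²`. It is the limit gradient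
plus terms of order `e` and `e²`, hence makes sense at `e = 0`. -/
def gradient (D : CorrectorData μ T Φ ι₀ ι₁ ι₂) (e : ℝ) (x : Fin N → ℝ) (ω : Ω) (y : Fin N → ℝ)
    (j : Fin N) : ℝ :=
  D.limitGradient x ω y j +
    e * ((∑ i, fderiv ℝ (D.φ₁ i) x (Pi.single j 1) * D.w₁ i ω) +
      (∑ i, D.φ₂ i x * D.G₂ i ω j * D.g i y)) +
    e ^ 2 * (∑ i, fderiv ℝ (D.φ₂ i) x (Pi.single j 1) * D.w₂ i ω * D.g i y)

variable (D : CorrectorData μ T Φ ι₀ ι₁ ι₂)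

lemma gradient_zero (x : Fin N → ℝ) (ω : Ω) (y : Fin N → ℝ) :
    D.gradient 0 x ω y = D.limitGradient x ω y := by
  ext j
  simp [gradient]

lemma contDiff_testFun {ω : Ω} (h₁ : ∀ i, HasOrbitGradient T (D.w₁ i) (D.G₁ i) ω)
    (h₂ : ∀ i, HasOrbitGradient T (D.w₂ i) (D.G₂ i) ω) (ε : ℝ) :
    ContDiff ℝ 1 (D.testFun ε ω) :=
  ((ContDiff.sum fun i _ => (D.contDiff_φ₀ i).mul contDiff_const).add (contDiff_const.mul
    (contDiff_sum_mul_comp_smul D.contDiff_φ₁ (fun i => (h₁ i).1) ε⁻¹))).add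
    (contDiff_const.mul (contDiff_sum_mul_comp_smul_mul_comp_smul D.contDiff_φ₂
      (fun i => (h₂ i).1) D.contDiff_g ε⁻¹ (ε ^ 2)⁻¹))

lemma fderiv_testFun {ω : Ω} (h₁ : ∀ i, HasOrbitGradient T (D.w₁ i) (D.G₁ i) ω)
    (h₂ : ∀ i, HasOrbitGradient T (D.w₂ i) (D.G₂ i) ω) {ε : ℝ} (hε : ε ≠ 0) {x : Fin N → ℝ}
    (hχ : ∀ i, D.χ i (T (ε⁻¹ • x) ω) = D.χ i ω) (j : Fin N) :
    fderiv ℝ (D.testFun ε ω) x (Pi.single j 1) =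
      D.gradient ε x (T (ε⁻¹ • x) ω) ((ε ^ 2)⁻¹ • x) j := by
  have hφ₀ := fun i => (D.contDiff_φ₀ i).differentiable one_ne_zero
  have hψ₀ : Differentiable ℝ fun z => ∑ i, D.φ₀ i z * D.χ i ω := by fun_prop
  have hψ₁ := (contDiff_sum_mul_comp_smul D.contDiff_φ₁ (fun i => (h₁ i).1) ε⁻¹).differentiable
    one_ne_zero
  have hψ₂ := (contDiff_sum_mul_comp_smul_mul_comp_smul D.contDiff_φ₂ (fun i => (h₂ i).1)
    D.contDiff_g ε⁻¹ (ε ^ 2)⁻¹).differentiable one_ne_zero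
  have hd₀ : fderiv ℝ (fun z => ∑ i, D.φ₀ i z * D.χ i ω) x (Pi.single j 1) =
      ∑ i, fderiv ℝ (D.φ₀ i) x (Pi.single j 1) * D.χ i (T (ε⁻¹ • x) ω) := by
    rw [fderiv_fun_sum fun i _ => by fun_prop, sum_apply]
    refine Finset.sum_congr rfl fun i _ => ?_
    rw [fderiv_mul_const (hφ₀ i x), hχ, smul_apply, smul_eq_mul, mul_comm]
  have hd₁ := fderiv_sum_mul_comp_smul_apply
    (fun i => (D.contDiff_φ₁ i).differentiable one_ne_zero)
    (fun i => (h₁ i).1.differentiable one_ne_zero) ε⁻¹ x (Pi.single j 1)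
  have hd₂ := fderiv_sum_mul_comp_smul_mul_comp_smul_apply
    (fun i => (D.contDiff_φ₂ i).differentiable one_ne_zero)
    (fun i => (h₂ i).1.differentiable one_ne_zero)
    (fun i => (D.contDiff_g i).differentiable one_ne_zero) ε⁻¹ (ε ^ 2)⁻¹ x (Pi.single j 1)
  simp only [fun i => (h₁ i).2] at hd₁
  simp only [fun i => (h₂ i).2] at hd₂
  unfold testFun gradient limitGradient
  rw [fderiv_fun_add ((hψ₀ x).fun_add ((hψ₁ x).const_mul ε)) ((hψ₂ x).const_mul (ε ^ 2)),
    fderiv_fun_add (hψ₀ x) ((hψ₁ x).const_mul ε), fderiv_const_mul (hψ₁ x),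
    fderiv_const_mul (hψ₂ x)]
  simp only [add_apply, smul_apply, smul_eq_mul, hd₀, hd₁, hd₂]
  field_simp
  ring

lemma isPeriodicField_limitGradient {P : Type*} [TopologicalSpace P] (j : Fin N) :
    IsPeriodicField D.weight fun (_ : P) x ω y => D.limitGradient x ω y j := by
  have hψ₀ : IsPeriodicField D.weight fun (_ : P) x ω (_ : Fin N → ℝ) =>
      ∑ i, fderiv ℝ (D.φ₀ i) x (Pi.single j 1) * D.χ i ω :=
    .sum _ fun i => .mul
      (.of_hasCompactSupport_fderiv (D.contDiff_φ₀ i) (D.hasCompactSupport_φ₀ i) _)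
      (.of_random (D.measurable_χ i) zero_le_one fun ω => by simpa using D.abs_χ_le_weight i ω)
  have hψ₁ : IsPeriodicField (fun _ => 1) fun (_ : P) x ω (_ : Fin N → ℝ) =>
      ∑ i, D.φ₁ i x * D.G₁ i ω j :=
    .sum _ fun i => .mul
      (.of_hasCompactSupport (D.contDiff_φ₁ i).continuous (D.hasCompactSupport_φ₁ i))
      ((D.hasBddStochGrad₁ i).isPeriodicField_gradient j)
  have hψ₂ : IsPeriodicField (fun _ => 1) fun (_ : P) x ω y =>
      ∑ i, D.φ₂ i x * D.w₂ i ω * fderiv ℝ (D.g i) y (Pi.single j 1) :=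
    .sum _ fun i => .mul (.mul
      (.of_hasCompactSupport (D.contDiff_φ₂ i).continuous (D.hasCompactSupport_φ₂ i))
      (D.hasBddStochGrad₂ i).isPeriodicField)
      (.of_zperiodic (((D.contDiff_g i).continuous_fderiv one_ne_zero).clm_apply continuous_const)
        ((D.zperiodic_g i).fderiv_apply _))
  exact (hψ₀.add (hψ₁.mono D.one_le_weight)).add (hψ₂.mono D.one_le_weight)

lemma isPeriodicField_gradient (j : Fin N) :
    IsPeriodicField D.weight fun (e : Set.Icc (0 : ℝ) 1) x ω y => D.gradient e x ω y j := by
  have hψ₁ : IsPeriodicField (fun _ => 1)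
      fun (_ : Set.Icc (0 : ℝ) 1) x ω (_ : Fin N → ℝ) =>
        ∑ i, fderiv ℝ (D.φ₁ i) x (Pi.single j 1) * D.w₁ i ω :=
    .sum _ fun i => .mul
      (.of_hasCompactSupport_fderiv (D.contDiff_φ₁ i) (D.hasCompactSupport_φ₁ i) _)
      (D.hasBddStochGrad₁ i).isPeriodicField
  have hg : ∀ i, IsPeriodicField (fun _ : Ω => 1)
      fun (_ : Set.Icc (0 : ℝ) 1) (_ : Fin N → ℝ) _ y => D.g i y :=
    fun i => .of_zperiodic (D.contDiff_g i).continuous (D.zperiodic_g i)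
  have hψ₂ : IsPeriodicField (fun _ => 1) fun (_ : Set.Icc (0 : ℝ) 1) x ω y =>
      ∑ i, D.φ₂ i x * D.G₂ i ω j * D.g i y :=
    .sum _ fun i => .mul (.mul
      (.of_hasCompactSupport (D.contDiff_φ₂ i).continuous (D.hasCompactSupport_φ₂ i))
      ((D.hasBddStochGrad₂ i).isPeriodicField_gradient j)) (hg i)
  have hψ₂' : IsPeriodicField (fun _ => 1) fun (_ : Set.Icc (0 : ℝ) 1) x ω y =>
      ∑ i, fderiv ℝ (D.φ₂ i) x (Pi.single j 1) * D.w₂ i ω * D.g i y :=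
    .sum _ fun i => .mul (.mul
      (.of_hasCompactSupport_fderiv (D.contDiff_φ₂ i) (D.hasCompactSupport_φ₂ i) _)
      (D.hasBddStochGrad₂ i).isPeriodicField) (hg i)
  have habs : ∀ e : Set.Icc (0 : ℝ) 1, |(e : ℝ)| ≤ 1 := fun e =>
    (abs_of_nonneg e.2.1).trans_le e.2.2
  exact ((D.isPeriodicField_limitGradient j).add
    ((IsPeriodicField.of_parameter continuous_subtype_val zero_le_one habs).mul
      (hψ₁.add hψ₂) |>.mono D.one_le_weight)).add
    ((IsPeriodicField.of_parameter (continuous_subtype_val.pow 2) zero_le_one fun e => by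
      simpa using habs e).mul hψ₂' |>.mono D.one_le_weight)

end CorrectorData

section Energy

lemma integral_comp_of_measurePreserving {α β : Type*} [MeasurableSpace α] [MeasurableSpace β]
    {E : Type*} [NormedAddCommGroup E] [NormedSpace ℝ E] {μ : Measure α} {ν : Measure β}
    {τ : α → β} (hτ : MeasurePreserving τ μ ν) {u : β → E}
    (hu : AEStronglyMeasurable u ν) : ∫ a, u (τ a) ∂μ = ∫ b, u b ∂ν := by
  rw [← hτ.map_eq] at hu ⊢
  exact (integral_map hτ.aemeasurable hu).symm

variable {N : ℕ} {Ω : Type*} [MeasurableSpace Ω] {μ : Measure Ω} {T : (Fin N → ℝ) → Ω → Ω}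
  {Φ : ℝ → ℝ} {f : (Fin N → ℝ) → Ω → (Fin N → ℝ) → (Fin N → ℝ) → ℝ} {ι₀ ι₁ ι₂ : Type*}
  [Fintype ι₀] [Fintype ι₁] [Fintype ι₂]

lemma CorrectorData.integral_comp_fderiv_testFun (D : CorrectorData μ T Φ ι₀ ι₁ ι₂)
    (hT : ∀ x, MeasurePreserving (T x) μ μ) (hf : IsPeriodicIntegrand μ Φ f)
    {ε : Set.Icc (0 : ℝ) 1} (hε : (ε : ℝ) ≠ 0) (x : Fin N → ℝ) :
    ∫ ω, f x (T ((ε : ℝ)⁻¹ • x) ω) (((ε : ℝ) ^ 2)⁻¹ • x)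
        (fun j => fderiv ℝ (D.testFun ε ω) x (Pi.single j 1)) ∂μ =
      ∫ ω, f x ω (((ε : ℝ) ^ 2)⁻¹ • x) (D.gradient ε x ω (((ε : ℝ) ^ 2)⁻¹ • x)) ∂μ := by
  set a : Fin N → ℝ := (ε : ℝ)⁻¹ • x
  set y : Fin N → ℝ := ((ε : ℝ) ^ 2)⁻¹ • x
  calc
    _ = ∫ ω, f x (T a ω) y (D.gradient ε x (T a ω) y) ∂μ := by
      refine integral_congr_ae ?_
      filter_upwards [HasBddStochGrad.ae_forall_hasOrbitGradient D.hasBddStochGrad₁,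
        HasBddStochGrad.ae_forall_hasOrbitGradient D.hasBddStochGrad₂,
        ae_all_iff.2 fun i => D.ae_χ_comp_eq i a] with ω h₁ h₂ hχ
      exact congrArg (f x (T a ω) y) (funext (D.fderiv_testFun h₁ h₂ hε hχ))
    _ = _ :=
      integral_comp_of_measurePreserving (hT a)
        (hf.aestronglyMeasurable_comp_field D.isPeriodicField_gradient ε x y)

theorem stmt7_general [IsFiniteMeasure μ] (hΦ : MonotoneOn Φ (Set.Ici 0)) (h0 : 0 ≤ Φ 0)
    (h2 : Delta2 Φ) (hT : ∀ x, MeasurePreserving (T x) μ μ) (hf : IsPeriodicIntegrand μ Φ f)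
    {Q : Set (Fin N → ℝ)} (hQ : MeasurableSet Q) (hQv : volume Q ≠ ∞)
    (D : CorrectorData μ T Φ ι₀ ι₁ ι₂) :
    (∀ ε, ∀ᵐ ω ∂μ, ContDiff ℝ 1 (D.testFun ε ω)) ∧
      Tendsto
        (fun ε : ℝ => ∫ x in Q, ∫ ω, f x (T (ε⁻¹ • x) ω) ((ε ^ 2)⁻¹ • x)
          (fun j => fderiv ℝ (D.testFun ε ω) x (Pi.single j 1)) ∂μ)
        (𝓝[>] 0)
        (𝓝 (∫ x in Q, ∫ ω, (∫ y in Ycube N, f x ω y (D.limitGradient x ω y)) ∂μ)) := by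
  constructor
  · intro ε
    filter_upwards [HasBddStochGrad.ae_forall_hasOrbitGradient D.hasBddStochGrad₁,
      HasBddStochGrad.ae_forall_hasOrbitGradient D.hasBddStochGrad₂] with ω h₁ h₂
    exact D.contDiff_testFun h₁ h₂ ε
  have hp : Tendsto (Set.projIcc (0 : ℝ) 1 zero_le_one) (𝓝[>] 0)
      (𝓝 (⟨0, Set.left_mem_Icc.2 zero_le_one⟩ : Set.Icc (0 : ℝ) 1)) := by
    rw [← Set.projIcc_left zero_le_one]
    exact continuous_projIcc.continuousAt.tendsto.mono_left nhdsWithin_le_nhds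
  have hδ : Tendsto (fun ε : ℝ => ε ^ 2) (𝓝[>] 0) (𝓝[≠] 0) :=
    tendsto_nhdsWithin_iff.2 ⟨by
      simpa using ((continuous_pow 2).tendsto (0 : ℝ)).mono_left nhdsWithin_le_nhds,
      eventually_mem_nhdsWithin.mono fun ε hε => pow_ne_zero 2 (ne_of_gt hε)⟩
  have hlim := hf.tendsto_setIntegral_integral_comp_field hΦ
    (fun C hC => D.integrable_comp_const_mul_weight hΦ h0 h2 hC) D.isPeriodicField_gradient
    hp hδ hQ hQv
  simp only [D.gradient_zero] at hlim
  refine hlim.congr' ?_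
  filter_upwards [Ioo_mem_nhdsGT zero_lt_one] with ε hε
  rw [Set.projIcc_of_mem zero_le_one (Set.Ioo_subset_Icc_self hε)]
  exact integral_congr_ae (ae_of_all _ fun x =>
    (D.integral_comp_fderiv_testFun hT hf (ε := ⟨ε, _⟩) hε.1.ne' x).symm)

end Energy

/-- convergence of energies along admissible corrector test functions. -/
theorem stmt7 {N : ℕ} (hN : 1 ≤ N) {Ω : Type*} [MeasurableSpace Ω] (μ : Measure Ω)
    [IsProbabilityMeasure μ]
    (Φ : ℝ → ℝ) (hΦ : IsYoung Φ) (hΦ2 : Delta2 Φ) (hΦ2' : DeltaPrime Φ)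
    (hΦc2 : Delta2 (conjY Φ)) (hΦc2' : DeltaPrime (conjY Φ))
    (T : (Fin N → ℝ) → Ω → Ω) (hT : IsDynSys μ T)
    (Q : Set (Fin N → ℝ)) (hQo : IsOpen Q) (hQb : Bornology.IsBounded Q)
    (f : (Fin N → ℝ) → Ω → (Fin N → ℝ) → (Fin N → ℝ) → ℝ)
    (hfmeas : ∀ x lam : Fin N → ℝ, Measurable fun p : Ω × (Fin N → ℝ) => f x p.1 p.2 lam)
    (hfcont : ∀ᵐ ω ∂μ, Continuous fun q : (Fin N → ℝ) × (Fin N → ℝ) × (Fin N → ℝ) =>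
      f q.1 ω q.2.1 q.2.2)
    (hH1 : ∃ ϖ : ℝ → ℝ, Continuous ϖ ∧ ϖ 0 = 0 ∧ (∀ t, 0 ≤ ϖ t) ∧
      ∃ a : (Fin N → ℝ) → ℝ, LocallyIntegrable a volume ∧
        ∀ᵐ p ∂(μ.prod (volume : Measure (Fin N → ℝ))), ∀ x x' lam : Fin N → ℝ,
          |f x p.1 p.2 lam - f x' p.1 p.2 lam| ≤ ϖ (enorm2 (x - x')) * (a p.2 + f x p.1 p.2 lam))
    (hH2 : ∀ᵐ p ∂(μ.prod (volume : Measure (Fin N → ℝ))), ∀ x : Fin N → ℝ,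
      StrictConvexOn ℝ Set.univ (f x p.1 p.2))
    (c₁ c₂ : ℝ) (hc₁ : 0 < c₁) (hc₂ : 0 < c₂)
    (hH3 : ∀ᵐ p ∂(μ.prod (volume : Measure (Fin N → ℝ))), ∀ x lam : Fin N → ℝ,
      c₁ * Φ (enorm2 lam) ≤ f x p.1 p.2 lam ∧ f x p.1 p.2 lam ≤ c₂ * (1 + Φ (enorm2 lam)))
    (hH4 : ∀ᵐ ω ∂μ, ∀ (x y lam : Fin N → ℝ) (k : Fin N → ℤ),
      f x ω (y + fun i => (k i : ℝ)) lam = f x ω y lam)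
    (m₀ m₁ m₂ : ℕ)
    (φ0 : Fin m₀ → (Fin N → ℝ) → ℝ) (χ : Fin m₀ → Ω → ℝ)
    (hφ0 : ∀ i, ContDiff ℝ (⊤ : ℕ∞) (φ0 i) ∧ HasCompactSupport (φ0 i) ∧ tsupport (φ0 i) ⊆ Q)
    (hχmeas : ∀ i, Measurable (χ i))
    (hχinv : ∀ i (y : Fin N → ℝ), ∀ᵐ ω ∂μ, χ i (T y ω) = χ i ω)
    (hχint : ∀ i, (∫⁻ ω, ENNReal.ofReal (Φ |χ i ω|) ∂μ) < ⊤)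
    (φ1 : Fin m₁ → (Fin N → ℝ) → ℝ) (w1 : Fin m₁ → Ω → ℝ) (G1 : Fin m₁ → Ω → Fin N → ℝ)
    (hφ1 : ∀ i, ContDiff ℝ (⊤ : ℕ∞) (φ1 i) ∧ HasCompactSupport (φ1 i) ∧ tsupport (φ1 i) ⊆ Q)
    (hw1 : ∀ i, HasBddStochGrad μ T (w1 i) (G1 i))
    (φ2 : Fin m₂ → (Fin N → ℝ) → ℝ) (w2 : Fin m₂ → Ω → ℝ) (G2 : Fin m₂ → Ω → Fin N → ℝ)
    (g2 : Fin m₂ → (Fin N → ℝ) → ℝ)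
    (hφ2 : ∀ i, ContDiff ℝ (⊤ : ℕ∞) (φ2 i) ∧ HasCompactSupport (φ2 i) ∧ tsupport (φ2 i) ⊆ Q)
    (hw2 : ∀ i, HasBddStochGrad μ T (w2 i) (G2 i))
    (hg2 : ∀ i, ContDiff ℝ (⊤ : ℕ∞) (g2 i) ∧ ZPeriodic (g2 i)) :
    (∀ ε : ℝ, 0 < ε → ∀ᵐ ω ∂μ,
      ContDiffOn ℝ 1
        (fun z : Fin N → ℝ =>
          (∑ i, φ0 i z * χ i ω) + ε * (∑ i, φ1 i z * w1 i (T (ε⁻¹ • z) ω)) +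
            ε ^ 2 * (∑ i, φ2 i z * w2 i (T (ε⁻¹ • z) ω) * g2 i ((ε ^ 2)⁻¹ • z))) Q) ∧
      Tendsto
        (fun ε : ℝ => ∫ x in Q, (∫ ω,
          f x (T (ε⁻¹ • x) ω) ((ε ^ 2)⁻¹ • x)
            (fun j => fderiv ℝ
              (fun z : Fin N → ℝ =>
                (∑ i, φ0 i z * χ i ω) + ε * (∑ i, φ1 i z * w1 i (T (ε⁻¹ • z) ω)) +
                  ε ^ 2 * (∑ i, φ2 i z * w2 i (T (ε⁻¹ • z) ω) * g2 i ((ε ^ 2)⁻¹ • z)))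
              x (Pi.single j 1)) ∂μ))
        (nhdsWithin 0 (Set.Ioi 0))
        (nhds (∫ x in Q, (∫ ω, (∫ y in Ycube N,
          f x ω y
            (fun j => (∑ i, fderiv ℝ (φ0 i) x (Pi.single j 1) * χ i ω) +
              (∑ i, φ1 i x * G1 i ω j) +
              (∑ i, φ2 i x * w2 i ω * fderiv ℝ (g2 i) y (Pi.single j 1)))) ∂μ))) := by
  have hmono := hΦ.monotoneOn
  have h0 : Φ 0 = 0 := hΦ.2.2.1
  have hf : IsPeriodicIntegrand μ Φ f := .of_ae_prod_bounds hΦ.2.2.2.2.1 hfmeas hfcont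
    (hH4.mono fun ω hω x lam y k => hω x y lam k) hc₁.le hc₂.le hH3
  let D : CorrectorData μ T Φ (Fin m₀) (Fin m₁) (Fin m₂) :=
    { φ₀ := φ0, χ := χ, φ₁ := φ1, w₁ := w1, G₁ := G1, φ₂ := φ2, w₂ := w2, G₂ := G2, g := g2
      contDiff_φ₀ := fun i => (hφ0 i).1.of_le (by simp)
      hasCompactSupport_φ₀ := fun i => (hφ0 i).2.1
      measurable_χ := hχmeas
      ae_χ_comp_eq := hχinv
      integrable_χ := fun i =>
        integrable_comp_abs_of_lintegral_lt_top hmono h0.ge (hχmeas i) (hχint i)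
      contDiff_φ₁ := fun i => (hφ1 i).1.of_le (by simp)
      hasCompactSupport_φ₁ := fun i => (hφ1 i).2.1
      hasBddStochGrad₁ := hw1
      contDiff_φ₂ := fun i => (hφ2 i).1.of_le (by simp)
      hasCompactSupport_φ₂ := fun i => (hφ2 i).2.1
      hasBddStochGrad₂ := hw2
      contDiff_g := fun i => (hg2 i).1.of_le (by simp)
      zperiodic_g := fun i => (hg2 i).2 }
  obtain ⟨hdiff, hlim⟩ := stmt7_general hmono h0.ge hΦ2 hT.2.2.1 hf hQo.measurableSet
    hQb.measure_lt_top.ne D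
  exact ⟨fun ε _ => (hdiff ε).mono fun ω hω => hω.contDiffOn, hlim⟩
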